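/- Let K ≥ 0 and N ≥ 1 be integers. If f : [0,∞) → ℝ is locally integrable and f ∈ ℱ_w^{K,N}, then 𝒫f ∈ ℱ_w^{K,N} and ℒf ∈ ℱ_w^{K,N}; in particular, if f ∈ ℛ_w^N then 𝒫f ∈ ℛ_w^N and ℒf ∈ ℛ_w^N. -/

import Mathlib

open MeasureTheory Real

/-- The primitive operator `𝒫f(x) = ∫₀ˣ f(s) ds`. -/
noncomputable def Pop (f : ℝ → ℝ) : ℝ → ℝ := fun x => ∫ s in (0:ℝ)..x, f s

/-- The operator `ℒf = f - 𝒫f`. -/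
noncomputable def Lop (f : ℝ → ℝ) : ℝ → ℝ := fun x => f x - Pop f x

/-- `f ∈ ℱ_w^{K,N}`: there is a polynomial `p` of degree `< K` and `c ≥ 0` with
`∫₀^ℓ |f(s) - p(s)eˢ| ds ≤ c(ℓ+1)^{N-1} e^{ℓ/2}` for all `ℓ ≥ 0`;
`ℛ_w^N := ℱ_w^{0,N}` (for `K = 0` the degree condition forces `p = 0`). -/
def MemFRw (K N : ℕ) (f : ℝ → ℝ) : Prop :=
  ∃ p : Polynomial ℝ, p.degree < (K : WithBot ℕ) ∧
    ∃ c : ℝ, 0 ≤ c ∧ ∀ ℓ : ℝ, 0 ≤ ℓ →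
      (∫ s in (0:ℝ)..ℓ, |f s - Polynomial.eval s p * Real.exp s|) ≤
        c * (ℓ + 1) ^ (N - 1) * Real.exp (ℓ / 2)

lemma exists_q (K : ℕ) : ∀ p : Polynomial ℝ, p.degree < (K : WithBot ℕ) →
    ∃ q : Polynomial ℝ, q.degree < (K : WithBot ℕ) ∧ q + q.derivative = p := by
  induction K with
  | zero =>
    intro p hp
    have : p = 0 := by
      rw [← Polynomial.degree_eq_bot]
      simpa using hp
    exact ⟨0, by simp, by simp [this]⟩
  | succ K ih =>
    intro p hp
    have hd : p.derivative.degree < (K : WithBot ℕ) := by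
      by_cases h0 : p = 0
      · simp [h0]
      · have h1 := Polynomial.degree_derivative_lt h0
        have h2 : p.degree ≤ (K : WithBot ℕ) := by
          rw [Polynomial.degree_eq_natDegree h0] at hp ⊢
          norm_cast at hp ⊢
          omega
        exact lt_of_lt_of_le h1 h2
    obtain ⟨q, hq, hqe⟩ := ih _ hd
    refine ⟨p - q, ?_, ?_⟩
    · refine lt_of_le_of_lt (Polynomial.degree_sub_le p q) (max_lt hp (hq.trans ?_))
      norm_cast
      omega
    · rw [Polynomial.derivative_sub, ← hqe]
      ring

lemma int_q (p q : Polynomial ℝ) (h : q + q.derivative = p) (x : ℝ) :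
    ∫ s in (0:ℝ)..x, p.eval s * Real.exp s = q.eval x * Real.exp x - q.eval 0 := by
  have hd : ∀ s ∈ Set.uIcc 0 x,
      HasDerivAt (fun s => q.eval s * Real.exp s) (p.eval s * Real.exp s) s := by
    intro s _
    have := (q.hasDerivAt s).mul (Real.hasDerivAt_exp s)
    refine HasDerivAt.congr_deriv this ?_
    rw [← h, Polynomial.eval_add]
    ring
  rw [intervalIntegral.integral_eq_sub_of_hasDerivAt hd]
  · simp
  · exact (p.continuous.mul Real.continuous_exp).intervalIntegrable _ _

lemma f_int {f : ℝ → ℝ} (hf : LocallyIntegrableOn f (Set.Ici (0:ℝ))) {x : ℝ} (hx : 0 ≤ x) :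
    IntervalIntegrable f volume 0 x := by
  rw [intervalIntegrable_iff_integrableOn_Icc_of_le hx]
  exact hf.integrableOn_compact_subset Set.Icc_subset_Ici_self isCompact_Icc

lemma Pop_int {f : ℝ → ℝ} (hf : LocallyIntegrableOn f (Set.Ici (0:ℝ))) {x : ℝ} (hx : 0 ≤ x) :
    IntervalIntegrable (Pop f) volume 0 x := by
  apply ContinuousOn.intervalIntegrable
  have h := (f_int hf hx)
  rw [intervalIntegrable_iff'] at h
  exact intervalIntegral.continuousOn_primitive_interval h

lemma pe_int (p : Polynomial ℝ) (x : ℝ) :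
    IntervalIntegrable (fun s => p.eval s * Real.exp s) volume 0 x :=
  (p.continuous.mul Real.continuous_exp).intervalIntegrable _ _

lemma Pop_mem (K N : ℕ) (f : ℝ → ℝ)
    (hf : LocallyIntegrableOn f (Set.Ici (0:ℝ))) (h : MemFRw K N f) : MemFRw K N (Pop f) := by
  obtain ⟨p, hp, c, hc, H⟩ := h
  obtain ⟨q, hq, hqe⟩ := exists_q K p hp
  refine ⟨q, hq, 2 * |q.eval 0| + 2 * c, by positivity, fun ℓ hℓ => ?_⟩
  have key : ∀ s ∈ Set.Icc 0 ℓ, |Pop f s - q.eval s * Real.exp s| ≤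
      (|q.eval 0| + c) * (ℓ + 1) ^ (N - 1) * Real.exp (s / 2) := by
    intro s hs
    have hs0 := hs.1
    have e1 : Pop f s - q.eval s * Real.exp s =
        (∫ t in (0:ℝ)..s, (f t - p.eval t * Real.exp t)) - q.eval 0 := by
      rw [intervalIntegral.integral_sub (f_int hf hs0) (pe_int p s), int_q p q hqe]
      unfold Pop
      ring
    have e2 := intervalIntegral.abs_integral_le_integral_abs
      (f := fun t => f t - p.eval t * Real.exp t) (μ := volume) hs0
    have e3 := H s hs0
    have e4 : (s + 1) ^ (N - 1) ≤ (ℓ + 1) ^ (N - 1) := by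
      have := hs.2
      gcongr
    have e5 : (1:ℝ) ≤ (ℓ + 1) ^ (N - 1) := one_le_pow₀ (by linarith)
    have e6 : 1 ≤ Real.exp (s / 2) := Real.one_le_exp (by linarith)
    have e7 : c * (s + 1) ^ (N - 1) * Real.exp (s / 2) ≤
        c * (ℓ + 1) ^ (N - 1) * Real.exp (s / 2) := by gcongr
    have e8 : |q.eval 0| * 1 ≤ |q.eval 0| * ((ℓ + 1) ^ (N - 1) * Real.exp (s / 2)) := by
      gcongr
      exact one_le_mul_of_one_le_of_one_le e5 e6
    rw [e1]
    refine (abs_sub _ _).trans ?_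
    linarith
  have hI : ∫ s in (0:ℝ)..ℓ, Real.exp (s / 2) = 2 * Real.exp (ℓ / 2) - 2 := by
    have hd : ∀ s ∈ Set.uIcc 0 ℓ,
        HasDerivAt (fun s => 2 * Real.exp (s / 2)) (Real.exp (s / 2)) s := by
      intro s _
      have := (((hasDerivAt_id s).div_const 2).exp).const_mul 2
      refine HasDerivAt.congr_deriv this ?_
      simp
      ring
    rw [intervalIntegral.integral_eq_sub_of_hasDerivAt hd]
    · simp
    · exact Continuous.intervalIntegrable (by fun_prop) _ _
  have := intervalIntegral.integral_mono_on hℓ (((Pop_int hf hℓ).sub (pe_int q ℓ)).abs)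
    (Continuous.intervalIntegrable (by fun_prop) _ _) key
  refine this.trans ?_
  rw [intervalIntegral.integral_const_mul, hI]
  have : 0 ≤ (|q.eval 0| + c) * (ℓ + 1) ^ (N - 1) := by positivity
  nlinarith

lemma Lop_mem (K N : ℕ) (f : ℝ → ℝ)
    (hf : LocallyIntegrableOn f (Set.Ici (0:ℝ))) (h : MemFRw K N f) : MemFRw K N (Lop f) := by
  obtain ⟨q, hq, d, hd, H'⟩ := Pop_mem K N f hf h
  obtain ⟨p, hp, c, hc, H⟩ := h
  refine ⟨p - q, lt_of_le_of_lt (Polynomial.degree_sub_le p q) (max_lt hp hq), c + d,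
    by positivity, fun ℓ hℓ => ?_⟩
  have i1 := ((f_int hf hℓ).sub (pe_int p ℓ)).abs
  have i2 := ((Pop_int hf hℓ).sub (pe_int q ℓ)).abs
  have i3 := (((f_int hf hℓ).sub (Pop_int hf hℓ)).sub (pe_int (p - q) ℓ)).abs
  have key : ∀ s ∈ Set.Icc 0 ℓ, |Lop f s - (p - q).eval s * Real.exp s| ≤
      |f s - p.eval s * Real.exp s| + |Pop f s - q.eval s * Real.exp s| := by
    intro s _
    have : Lop f s - (p - q).eval s * Real.exp s =
      (f s - p.eval s * Real.exp s) - (Pop f s - q.eval s * Real.exp s) := by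
      rw [Polynomial.eval_sub]
      unfold Lop
      ring
    rw [this]
    exact abs_sub _ _
  have := intervalIntegral.integral_mono_on hℓ i3 (i1.add i2) key
  refine this.trans ?_
  have e := intervalIntegral.integral_add i1 i2
  have := H ℓ hℓ
  have := H' ℓ hℓ
  refine e.le.trans ?_
  linarith

/-- The operators `𝒫` and `ℒ` preserve the weak class `ℱ_w^{K,N}`; in particular
(taking `K = 0`) they preserve the weak remainder class `ℛ_w^N = ℱ_w^{0,N}`. -/
theorem Pop_Lop_preserve_FRw (K N : ℕ) (hN : 1 ≤ N) (f : ℝ → ℝ)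
    (hf : LocallyIntegrableOn f (Set.Ici (0:ℝ))) (h : MemFRw K N f) :
    (MemFRw K N (Pop f) ∧ MemFRw K N (Lop f)) ∧
      (MemFRw 0 N f → MemFRw 0 N (Pop f) ∧ MemFRw 0 N (Lop f)) :=
  ⟨⟨Pop_mem K N f hf h, Lop_mem K N f hf h⟩,
    fun h0 => ⟨Pop_mem 0 N f hf h0, Lop_mem 0 N f hf h0⟩⟩
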